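/- arXiv:1807.11700 — 2 statements merged into one kernel-verified Lean document; each statement's English description precedes it below -/
import Mathlib

section
/- Let g ≥ 0 be an integer, let a_0 < b_0 < a_1 < ⋯ < a_g < b_g be real numbers, set D(X) = ∏_{j=0}^{g}(X−a_j)(X−b_j) and E = ⋃_{j=0}^{g}[a_j,b_j]. Suppose P, Q ∈ ℝ[X] are monic and M > 0 satisfies P² − D·Q² = M², and let r = deg P. Then P is the r-th Chebyshev polynomial of E: sup_{x ∈ E} |P(x)| = M, and every monic polynomial q ∈ ℝ[X] of degree r satisfies sup_{x ∈ E} |q(x)| ≥ M. -/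
/-!
Since `D ≤ 0` on `E`, the Pell equation gives `|P| ≤ M` on `E`, with equality at `a 0`.

The lower bound is a Bernstein–Walsh argument. Off `E`, regarded as a subset of `ℂ`, the
polynomial `D` has a holomorphic square root `s ~ z ^ (g + 1)`, and `w = P + s Q`,
`w' = P - s Q` satisfy `w w' = M ^ 2`. Hence `w` has no zeros, `w ~ 2 z ^ r` at infinity, and
`‖w‖ → M` at `E`. If a monic `q` of degree `r` satisfied `|q| ≤ m < c < M` on `E`, then, with
`T n` the Chebyshev polynomials on `[-1, 1]`, the maximum principle applied to
`T n (q / m) / w ^ (n + 1)` on the exterior of `E` would give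
`‖T n (q / m)‖ ≤ 2 (‖w‖ / c) ^ (n + 1)` for every `n` (`bernstein_walsh`).

At a large real `x`, letting `n → ∞` yields
`2 q(x) / m ≤ ‖w‖ / c + c / ‖w‖ ≤ (‖w‖ + ‖w'‖) / c = 2 P(x) / c`
(`two_mul_le_of_chebyshev`), and `x → ∞` gives `c ≤ m`, a contradiction. This route needs no
information on the location of the zeros of `Q`.
-/

open MeasureTheory Polynomial Set
open scoped NNReal ENNReal

/-- Maximum principle on the exterior of a compact set: the boundary values on `K` enter only
through a bound near `K`, so `F` need not extend continuously to `K`. -/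
lemma norm_le_of_exterior {K V : Set ℂ} (hK : IsCompact K) (hKne : K.Nonempty) (hV : IsOpen V)
    (hKV : K ⊆ V) {F : ℂ → ℂ} (hF : DifferentiableOn ℂ F Kᶜ)
    (hlim : Filter.Tendsto F (Bornology.cobounded ℂ) (nhds 0)) {c : ℝ} (hc : 0 < c)
    (hb : ∀ z ∈ V, z ∉ K → ‖F z‖ ≤ c) {z : ℂ} (hz : z ∉ K) : ‖F z‖ ≤ c := by
  obtain ⟨δ, hδ, hδV⟩ := hK.exists_thickening_subset_open hV hKV
  have hd : 0 < Metric.infDist z K := (hK.isClosed.notMem_iff_infDist_pos hKne).1 hz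
  obtain ⟨ε, hε, hε2⟩ := exists_between (lt_min hδ hd)
  obtain ⟨R, hR⟩ : ∃ R : ℝ, ∀ y : ℂ, R ≤ ‖y‖ → ‖F y‖ ≤ c := by
    have h := hlim.norm.eventually (ge_mem_nhds (by simpa using hc))
    rw [← comap_norm_atTop, Filter.eventually_comap] at h
    obtain ⟨R, hR⟩ := Filter.eventually_atTop.1 h
    exact ⟨R, fun y hy => hR _ hy y rfl⟩
  set U : Set ℂ := Metric.ball 0 (max R (‖z‖ + 1)) ∩ {y | ε < Metric.infDist y K} with hU
  have hUo : IsOpen U := Metric.isOpen_ball.inter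
    (isOpen_lt continuous_const (Metric.continuous_infDist_pt K))
  have hcl : closure U ⊆ {y | ε ≤ Metric.infDist y K} :=
    closure_minimal (inter_subset_right.trans fun y hy => by
      rw [mem_ofPred_eq] at hy ⊢; exact hy.le)
      (isClosed_le continuous_const (Metric.continuous_infDist_pt K))
  have hclK : closure U ⊆ Kᶜ := fun y hy =>
    (hK.isClosed.notMem_iff_infDist_pos hKne).2 (hε.trans_le (hcl hy))
  refine Complex.norm_le_of_forall_mem_frontier_norm_le (U := U)
    (Metric.isBounded_ball.subset inter_subset_left) (hF.mono hclK).diffContOnCl ?_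
    (subset_closure ⟨?_, lt_of_lt_of_le hε2 (min_le_right _ _)⟩)
  · intro y hy
    rw [hUo.frontier_eq] at hy
    by_cases h1 : R ≤ ‖y‖
    · exact hR y h1
    · refine hb y (hδV ?_) (hclK hy.1)
      have : ¬ ε < Metric.infDist y K := fun h => hy.2
        ⟨by simpa using Or.inl (not_le.1 h1), h⟩
      rw [Metric.mem_thickening_iff_infDist_lt hKne]
      exact (not_lt.1 this).trans_lt (hε2.trans_le (min_le_left _ _))
  · simp

/-- Read off from the reflected polynomial, since `p(z) / z ^ N` is its value at `z⁻¹`. -/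
lemma tendsto_eval_div_pow (p : ℂ[X]) (N : ℕ) (hp : p.natDegree ≤ N) :
    Filter.Tendsto (fun z => p.eval z / z ^ N) (Bornology.cobounded ℂ) (nhds (p.coeff N)) := by
  have h : Filter.Tendsto (fun z : ℂ => (reflect N p).eval z⁻¹) (Bornology.cobounded ℂ)
      (nhds ((reflect N p).eval 0)) :=
    ((reflect N p).continuous.tendsto 0).comp Filter.tendsto_inv₀_cobounded
  rw [← coeff_zero_eq_eval_zero, coeff_reflect, revAt_zero] at h
  refine h.congr' ?_
  filter_upwards [Bornology.isBounded_singleton (x := (0 : ℂ))] with z hz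
  have hz : z ≠ 0 := hz
  let _ := invertibleOfNonzero hz
  have := eval₂_reflect_mul_pow (RingHom.id ℂ) z N p hp
  rw [invOf_eq_inv] at this
  rw [eq_div_iff (pow_ne_zero _ hz)]
  exact this

/-- The branch of `√((z - a) (z - b))` on the complement of `[a, b]` that is asymptotic to `z`
at infinity, with `m` the midpoint and `h` the half-length of `[a, b]`. -/
noncomputable def sqrtBranch (m h : ℝ) (z : ℂ) : ℂ :=
  (z - m) * (1 - (h / (z - m)) ^ 2) ^ (1 / 2 : ℂ)

lemma sqrtBranch_sq (m h : ℝ) {z : ℂ} (hz : z ≠ m) :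
    sqrtBranch m h z ^ 2 = (z - m) ^ 2 - h ^ 2 := by
  have : z - m ≠ 0 := sub_ne_zero.2 hz
  have h2 : ((1 - (h / (z - m)) ^ 2) ^ (1 / 2 : ℂ)) ^ 2 = 1 - (h / (z - m)) ^ 2 := by
    rw [← Complex.cpow_nat_mul]; norm_num
  rw [sqrtBranch, mul_pow, h2]
  field_simp

lemma sqrtBranch_arg_mem_slitPlane (m h : ℝ) {z : ℂ}
    (hz : ∀ x : ℝ, |x - m| ≤ |h| → z ≠ x) : 1 - (h / (z - m)) ^ 2 ∈ Complex.slitPlane := by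
  have hzm : z - m ≠ 0 := sub_ne_zero.2 (hz m (by simp))
  by_contra hcon
  rw [Complex.mem_slitPlane_iff_not_le_zero, not_not] at hcon
  -- The square of `h / (z - m)` would then be real and at least `1`, so `z` lies on the cut.
  set u : ℂ := h / (z - m) with hu
  have hre : 1 ≤ u.re ^ 2 - u.im ^ 2 := by
    have := (Complex.le_def.1 hcon).1
    simp [pow_two] at this
    nlinarith
  have him : u.re * u.im = 0 := by
    have := (Complex.le_def.1 hcon).2
    simp [pow_two] at this
    nlinarith
  have hure : u.re ≠ 0 := by
    intro h0; rw [h0] at hre; nlinarith [sq_nonneg u.im]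
  have huim : u.im = 0 := by simpa [hure] using him
  have huu : u = (u.re : ℂ) := by apply Complex.ext <;> simp [huim]
  have hzeq : z = ((m + h / u.re : ℝ) : ℂ) := by
    have hne : (u.re : ℂ) ≠ 0 := by exact_mod_cast hure
    have : u * (z - m) = h := by rw [hu]; field_simp
    rw [huu] at this
    push_cast
    rw [← this]; field_simp; ring
  refine hz _ ?_ hzeq
  rw [add_sub_cancel_left, abs_div]
  refine div_le_self (abs_nonneg _) ?_
  rw [huim] at hre
  nlinarith [sq_abs u.re, abs_nonneg u.re]

lemma sqrtBranch_differentiableAt (m h : ℝ) {z : ℂ}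
    (hz : ∀ x : ℝ, |x - m| ≤ |h| → z ≠ x) : DifferentiableAt ℂ (sqrtBranch m h) z := by
  have hzm : z - m ≠ 0 := sub_ne_zero.2 (hz m (by simp))
  have h1 := sqrtBranch_arg_mem_slitPlane m h hz
  have h2 : DifferentiableAt ℂ (fun y : ℂ => y - m) z := by fun_prop
  have h3 : DifferentiableAt ℂ (fun y : ℂ => 1 - (h / (y - m)) ^ 2) z :=
    (differentiableAt_const (1 : ℂ)).sub (((differentiableAt_const (h : ℂ)).div h2 hzm).pow 2)
  exact h2.mul (h3.cpow (differentiableAt_const (1 / 2 : ℂ)) h1)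

lemma tendsto_sqrtBranch_div (m h : ℝ) :
    Filter.Tendsto (fun z => sqrtBranch m h z / z) (Bornology.cobounded ℂ) (nhds 1) := by
  have hi := Filter.tendsto_inv₀_cobounded (α := ℂ)
  have h1 : Filter.Tendsto (fun z : ℂ => 1 - m * z⁻¹) (Bornology.cobounded ℂ) (nhds 1) := by
    simpa using tendsto_const_nhds.sub (hi.const_mul (m : ℂ))
  have h2 : Filter.Tendsto (fun z : ℂ => 1 - (h * z⁻¹ / (1 - m * z⁻¹)) ^ 2)
      (Bornology.cobounded ℂ) (nhds 1) := by
    simpa using tendsto_const_nhds.sub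
      (((hi.const_mul (h : ℂ)).div h1 one_ne_zero).pow 2)
  have h3 : Filter.Tendsto
      (fun z : ℂ => (1 - m * z⁻¹) * (1 - (h * z⁻¹ / (1 - m * z⁻¹)) ^ 2) ^ (1 / 2 : ℂ))
      (Bornology.cobounded ℂ) (nhds 1) := by
    have := h1.mul (h2.cpow (tendsto_const_nhds (x := (1 / 2 : ℂ))) (by simp))
    simpa using this
  refine h3.congr' ?_
  filter_upwards [Bornology.isBounded_singleton (x := (0 : ℂ))] with z hz
  have hz : z ≠ 0 := hz
  have e : h * z⁻¹ / (1 - m * z⁻¹) = h / (z - m) := by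
    rw [← mul_div_mul_right _ _ hz]
    congr 1 <;> field_simp
  rw [e, sqrtBranch]
  field_simp

/-- Bernstein–Walsh inequality in terms of a function `w` with `‖w‖ ≥ c` near `K` and a pole of
order `r` at infinity. The exponent `n + 1` in place of `n` forces decay at infinity. -/
lemma bernstein_walsh {K V : Set ℂ} (hK : IsCompact K) (hKne : K.Nonempty) (hV : IsOpen V)
    (hKV : K ⊆ V) {w : ℂ → ℂ} (hw : DifferentiableOn ℂ w Kᶜ) (hw0 : ∀ z ∉ K, w z ≠ 0)
    {r : ℕ} (hr : r ≠ 0)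
    (hlim : Filter.Tendsto (fun z => w z / z ^ r) (Bornology.cobounded ℂ) (nhds 2))
    {c : ℝ} (hc : 0 < c) (hb : ∀ z ∈ V, z ∉ K → c ≤ ‖w z‖)
    (p : ℂ[X]) (n : ℕ) (hdeg : p.natDegree ≤ r * n) (hp : ∀ z ∈ K, ‖p.eval z‖ < 2)
    {z : ℂ} (hz : z ∉ K) : ‖p.eval z‖ ≤ 2 * (‖w z‖ / c) ^ (n + 1) := by
  have key : ‖p.eval z / w z ^ (n + 1)‖ ≤ 2 / c ^ (n + 1) := by
    refine norm_le_of_exterior (V := V ∩ {y | ‖p.eval y‖ < 2})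
      (F := fun y => p.eval y / w y ^ (n + 1)) hK hKne
      (hV.inter (isOpen_lt p.continuous.norm continuous_const))
      (fun y hy => ⟨hKV hy, hp y hy⟩) ?_ ?_ (by positivity) ?_ hz
    · exact p.differentiable.differentiableOn.div (hw.pow _) fun y hy => pow_ne_zero _ (hw0 y hy)
    · have h := ((tendsto_eval_div_pow p (r * n) hdeg).div (hlim.pow (n + 1))
        (by norm_num)).mul ((Filter.tendsto_inv₀_cobounded (α := ℂ)).pow r)
      rw [zero_pow hr, mul_zero] at h
      refine h.congr' ?_
      filter_upwards [Bornology.isBounded_singleton (x := (0 : ℂ)), hK.isBounded] with y hy hyK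
      have hy : y ≠ 0 := hy
      have := hw0 y hyK
      simp only [Pi.div_apply]
      rw [div_pow, ← pow_mul, mul_add, mul_one, pow_add, inv_pow]
      have : y ^ r ≠ 0 := pow_ne_zero _ hy
      have : y ^ (r * n) ≠ 0 := pow_ne_zero _ hy
      field_simp
      ring
    · intro y hy hyK
      rw [norm_div, norm_pow]
      have : c ^ (n + 1) ≤ ‖w y‖ ^ (n + 1) := by gcongr; exact hb y hy.1 hyK
      have h2 : ‖p.eval y‖ ≤ 2 := le_of_lt hy.2
      gcongr
  have hpos : 0 < ‖w z‖ := norm_pos_iff.2 (hw0 z hz)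
  rw [norm_div, norm_pow, div_le_iff₀ (by positivity)] at key
  rw [div_pow]
  calc _ ≤ _ := key
    _ = _ := by ring

/-- Chebyshev polynomials grow like `exp (n * arcosh y)`; a bound by powers of `v` therefore
compares `y` with the Joukowski image of `v`. -/
lemma two_mul_le_of_chebyshev {y v : ℝ} (hy : 1 ≤ y) (hv : 0 < v)
    (h : ∀ n : ℕ, (Chebyshev.T ℝ n).eval y ≤ 2 * v ^ (n + 1)) : 2 * y ≤ v + v⁻¹ := by
  set θ := Real.arcosh y
  have hθ0 : 0 ≤ θ := Real.arcosh_nonneg hy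
  have hyc : Real.cosh θ = y := Real.cosh_arcosh hy
  have ht : 1 ≤ Real.exp θ := Real.one_le_exp hθ0
  have hle : Real.exp θ ≤ v := by
    by_contra hcon
    push Not at hcon
    have h1 : 1 < Real.exp θ / v := (one_lt_div hv).2 hcon
    obtain ⟨n, hn⟩ := pow_unbounded_of_one_lt (4 * v) h1
    have h2 := h n
    rw [← hyc, Chebyshev.T_real_cosh, Real.cosh_eq] at h2
    have h3 : Real.exp θ ^ n = Real.exp (((n : ℤ) : ℝ) * θ) := by
      rw [← Real.exp_nat_mul]; simp
    rw [div_pow, lt_div_iff₀ (by positivity), h3] at hn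
    have := Real.exp_pos (-(((n : ℤ) : ℝ) * θ))
    rw [pow_succ] at h2
    nlinarith
  rw [← hyc, Real.cosh_eq, Real.exp_neg]
  have hv1 : 1 ≤ v := ht.trans hle
  set t := Real.exp θ
  have ht0 : 0 < t := by positivity
  have : v + v⁻¹ - (t + t⁻¹) = (v - t) * (v * t - 1) / (v * t) := by field_simp; ring
  have h5 : 0 ≤ (v - t) * (v * t - 1) / (v * t) := by
    apply div_nonneg _ (by positivity)
    apply mul_nonneg (by linarith)
    nlinarith
  linarith

lemma eval_ofReal_map (p : ℝ[X]) (x : ℝ) : (p.map Complex.ofRealHom).eval (x : ℂ) = p.eval x := by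
  simpa using eval_map_apply Complex.ofRealHom (p := p) x

/-- In particular `P` is not constant. -/
lemma natDegree_of_pell {g : ℕ} {D P Q : ℝ[X]} (hD : D.Monic) (hDdeg : D.natDegree = 2 * (g + 1))
    (hQ : Q.Monic) {M : ℝ} (hPell : P ^ 2 - D * Q ^ 2 = C (M ^ 2)) :
    P.natDegree = g + 1 + Q.natDegree := by
  have h : P ^ 2 = D * Q ^ 2 + C (M ^ 2) := by rw [← hPell]; ring
  have h2 := congrArg natDegree h
  rw [natDegree_add_C, hD.natDegree_mul (hQ.pow 2), hQ.natDegree_pow, natDegree_pow, hDdeg] at h2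
  omega

/-- The lower bound, for any positive bound `m` of `|q|` on `E`; applied to every `m` above the
supremum, so that `m > 0` is available even when the supremum is not yet known to be positive. -/
lemma chebyshev_lower_bound (g : ℕ) (a b : Fin (g + 1) → ℝ) (h1 : ∀ j, a j < b j)
    (D : ℝ[X]) (hD : D = ∏ j : Fin (g + 1), (X - C (a j)) * (X - C (b j)))
    (E : Set ℝ) (hE : E = ⋃ j, Icc (a j) (b j)) (hDE : ∀ x ∈ E, D.eval x ≤ 0)
    (P Q : ℝ[X]) (hP : P.Monic) (hQ : Q.Monic) (M : ℝ) (hM : 0 < M)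
    (hPell : P ^ 2 - D * Q ^ 2 = C (M ^ 2)) (q : ℝ[X]) (hq : q.Monic)
    (hqd : q.natDegree = P.natDegree) (m : ℝ) (hm : 0 < m) (hqm : ∀ x ∈ E, |q.eval x| ≤ m) :
    M ≤ m := by
  by_contra hcon
  push Not at hcon
  obtain ⟨c, hmc, hcM⟩ := exists_between hcon
  have hc : 0 < c := hm.trans hmc
  have hfac : ∀ j, ((X - C (a j)) * (X - C (b j)) : ℝ[X]).Monic := fun j =>
    (monic_X_sub_C _).mul (monic_X_sub_C _)
  have hDm : D.Monic := hD ▸ monic_prod_of_monic _ _ fun j _ => hfac j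
  have hDdeg : D.natDegree = 2 * (g + 1) := by
    rw [hD, natDegree_prod_of_monic _ _ fun j _ => hfac j]
    simp [(monic_X_sub_C _).natDegree_mul (monic_X_sub_C _), mul_comm]
  have hdeg := natDegree_of_pell hDm hDdeg hQ hPell
  have hPellR : ∀ x, P.eval x ^ 2 - D.eval x * Q.eval x ^ 2 = M ^ 2 := fun x => by
    simpa using congrArg (eval x) hPell
  set φ := Complex.ofRealHom
  have hPellC : ∀ z : ℂ, (P.map φ).eval z ^ 2 - (D.map φ).eval z * (Q.map φ).eval z ^ 2
      = (M : ℂ) ^ 2 := fun z => by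
    simpa [φ] using congrArg (fun p => (p.map φ).eval z) hPell
  have hEc : IsCompact E := hE ▸ isCompact_iUnion fun j => isCompact_Icc
  have hEne : E.Nonempty := ⟨a 0, by rw [hE]; exact mem_iUnion.2 ⟨0, le_rfl, (h1 0).le⟩⟩
  set K : Set ℂ := (fun x : ℝ => (x : ℂ)) '' E with hKdef
  have hK : IsCompact K := hEc.image Complex.continuous_ofReal
  have hKne : K.Nonempty := hEne.image _
  have hcut : ∀ z ∉ K, ∀ j, ∀ x : ℝ, |x - (a j + b j) / 2| ≤ |(b j - a j) / 2| → z ≠ x := by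
    rintro z hz j x hx rfl
    refine hz ⟨x, ?_, rfl⟩
    rw [abs_of_nonneg (a := (b j - a j) / 2) (by linarith [h1 j]), abs_le] at hx
    rw [hE]
    exact mem_iUnion.2 ⟨j, by constructor <;> linarith [hx.1, hx.2]⟩
  -- `s` is a holomorphic square root of `D` off `K`.
  set s : ℂ → ℂ := fun z => ∏ j, sqrtBranch ((a j + b j) / 2) ((b j - a j) / 2) z with hs
  have hs2 : ∀ z ∉ K, s z ^ 2 = (D.map φ).eval z := by
    intro z hz
    rw [hs, hD]
    simp only [← Finset.prod_pow, Polynomial.map_prod, eval_prod]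
    refine Finset.prod_congr rfl fun j _ => ?_
    rw [sqrtBranch_sq _ _ (hcut z hz j _ (by simp))]
    simp [φ]
    ring
  have hsd : DifferentiableOn ℂ s Kᶜ := by
    intro z hz
    refine DifferentiableAt.differentiableWithinAt ?_
    exact DifferentiableAt.fun_finsetProd fun j _ => sqrtBranch_differentiableAt _ _ (hcut z hz j)
  have hslim : Filter.Tendsto (fun z => s z / z ^ (g + 1)) (Bornology.cobounded ℂ) (nhds 1) := by
    have := tendsto_finsetProd (Finset.univ : Finset (Fin (g + 1)))
      fun j _ => tendsto_sqrtBranch_div ((a j + b j) / 2) ((b j - a j) / 2)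
    simpa [Finset.prod_div_distrib] using this
  set w : ℂ → ℂ := fun z => (P.map φ).eval z + s z * (Q.map φ).eval z with hw
  set w' : ℂ → ℂ := fun z => (P.map φ).eval z - s z * (Q.map φ).eval z with hw'
  have hww : ∀ z ∉ K, w z * w' z = (M : ℂ) ^ 2 := by
    intro z hz
    rw [← hPellC z, ← hs2 z hz]
    simp only [hw, hw']; ring
  have hw0 : ∀ z ∉ K, w z ≠ 0 := by
    intro z hz h0
    have := hww z hz
    rw [h0, zero_mul] at this
    have hM' : (M : ℂ) ≠ 0 := by exact_mod_cast hM.ne'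
    exact pow_ne_zero 2 hM' this.symm
  have hnprod : ∀ z ∉ K, ‖w z‖ * ‖w' z‖ = M ^ 2 := by
    intro z hz
    rw [← norm_mul, hww z hz]; simp
  have hnsum : ∀ z ∉ K, ‖w z‖ ^ 2 + ‖w' z‖ ^ 2 =
      2 * (‖(P.map φ).eval z‖ ^ 2 + ‖(D.map φ).eval z‖ * ‖(Q.map φ).eval z‖ ^ 2) := by
    intro z hz
    rw [← hs2 z hz, norm_pow, ← mul_pow, ← norm_mul]
    exact parallelogram_law_with_norm ℂ _ _
  have hwlim : Filter.Tendsto (fun z => w z / z ^ P.natDegree) (Bornology.cobounded ℂ)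
      (nhds 2) := by
    have e1 := tendsto_eval_div_pow (P.map φ) P.natDegree natDegree_map_le
    have e2 := tendsto_eval_div_pow (Q.map φ) Q.natDegree natDegree_map_le
    have e3 := e1.add (hslim.mul e2)
    rw [coeff_map, coeff_map, hP.coeff_natDegree, hQ.coeff_natDegree] at e3
    have e4 : (φ 1 + 1 * φ 1 : ℂ) = 2 := by simp; norm_num
    rw [e4] at e3
    refine e3.congr fun z => ?_
    rw [hdeg, hw]
    simp only
    rw [add_div, pow_add, mul_div_mul_comm]
  -- Near `K` the sum of squares of `‖w‖`, `‖w'‖` is close to `2 M ^ 2` while their product is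
  -- `M ^ 2`, so both norms are close to `M`.
  set V : Set ℂ := {z | ‖(P.map φ).eval z‖ ^ 2 + ‖(D.map φ).eval z‖ * ‖(Q.map φ).eval z‖ ^ 2
    < M ^ 2 + (M - c) ^ 2 / 2} with hVdef
  have hV : IsOpen V := by
    refine isOpen_lt ?_ continuous_const
    exact ((P.map φ).continuous.norm.pow 2).add
      ((D.map φ).continuous.norm.mul ((Q.map φ).continuous.norm.pow 2))
  have hKV : K ⊆ V := by
    rintro _ ⟨x, hx, rfl⟩
    have h0 := hDE x hx
    have h3 := hPellR x
    have h4 : 0 < (M - c) ^ 2 := by have := sub_pos.2 hcM; positivity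
    rw [hVdef, mem_ofPred_eq]
    simp only [φ, eval_ofReal_map, Complex.norm_real, Real.norm_eq_abs, sq_abs]
    rw [abs_of_nonpos h0]
    linarith
  have hVb : ∀ z ∈ V, z ∉ K → c ≤ ‖w z‖ := by
    intro z hz hzK
    rw [hVdef, mem_ofPred_eq] at hz
    have e1 := hnprod z hzK
    have e2 := hnsum z hzK
    have n1 := norm_nonneg (w z)
    have n2 := norm_nonneg (w' z)
    by_contra hlt
    push Not at hlt
    -- `‖w‖ < c` would force `‖w'‖ < M`, so that the product falls short of `M ^ 2`.
    have h5 : (‖w' z‖ - ‖w z‖) ^ 2 < (M - c) ^ 2 := by nlinarith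
    have h6 : ‖w' z‖ - ‖w z‖ < M - c := lt_of_pow_lt_pow_left₀ 2 (by linarith) h5
    nlinarith
  have hbw := fun (p : ℂ[X]) (n : ℕ) => bernstein_walsh hK hKne hV hKV
    ((P.map φ).differentiable.differentiableOn.add
      (hsd.mul (Q.map φ).differentiable.differentiableOn)) hw0
    (r := P.natDegree) (by omega) hwlim hc hVb p n
  have hev : ∀ᶠ x : ℝ in Filter.atTop, q.eval x / P.eval x ≤ m / c := by
    obtain ⟨B, hB⟩ := hEc.bddAbove
    have tD := D.tendsto_atTop_of_leadingCoeff_nonneg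
      (by rw [← natDegree_pos_iff_degree_pos]; omega) (by simp [hDm.leadingCoeff])
    have tP := P.tendsto_atTop_of_leadingCoeff_nonneg
      (by rw [← natDegree_pos_iff_degree_pos]; omega) (by simp [hP.leadingCoeff])
    have tq := q.tendsto_atTop_of_leadingCoeff_nonneg
      (by rw [← natDegree_pos_iff_degree_pos]; omega) (by simp [hq.leadingCoeff])
    filter_upwards [Filter.eventually_gt_atTop B, tD.eventually_ge_atTop 0,
      tP.eventually_gt_atTop 0, tq.eventually_ge_atTop m] with x hxB hxD hxP hxq
    have hxK : (x : ℂ) ∉ K := by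
      rintro ⟨y, hy, hyx⟩
      have : y = x := Complex.ofReal_injective hyx
      exact absurd (hB hy) (not_le.2 (this ▸ hxB))
    have hwpos : 0 < ‖w x‖ := norm_pos_iff.2 (hw0 _ hxK)
    -- Here `D(x) ≥ 0`, so `‖w‖ ^ 2 + ‖w'‖ ^ 2 = 4 P ^ 2 - 2 M ^ 2`; the branch of `s` is irrelevant.
    have hsum : ‖w x‖ + ‖w' x‖ = 2 * P.eval x := by
      have e1 := hnprod x hxK
      have e2 := hnsum x hxK
      simp only [φ, eval_ofReal_map, Complex.norm_real, Real.norm_eq_abs, sq_abs] at e2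
      rw [abs_of_nonneg hxD] at e2
      have e3 := hPellR x
      refine (sq_eq_sq₀ (by positivity) (by positivity)).1 ?_
      linarith
    have hT : 2 * (q.eval x / m) ≤ ‖w x‖ / c + (‖w x‖ / c)⁻¹ := by
      refine two_mul_le_of_chebyshev ((one_le_div hm).2 hxq) (by positivity) fun n => ?_
      set p : ℝ[X] := (Chebyshev.T ℝ n).comp (C m⁻¹ * q) with hp
      have hpe : ∀ y, p.eval y = (Chebyshev.T ℝ n).eval (q.eval y / m) := fun y => by
        simp [hp, eval_comp, div_eq_inv_mul]
      have hpd : (p.map φ).natDegree ≤ P.natDegree * n := by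
        refine natDegree_map_le.trans (natDegree_comp_le.trans ?_)
        rw [Chebyshev.natDegree_T, Int.natAbs_natCast, mul_comm, ← hqd]
        exact Nat.mul_le_mul_right _ (natDegree_C_mul_le _ _)
      have hb := hbw (p.map φ) n hpd ?_ hxK
      · rw [eval_ofReal_map, Complex.norm_real, hpe] at hb
        exact (le_abs_self _).trans hb
      · rintro _ ⟨y, hy, rfl⟩
        simp only [φ, eval_ofReal_map, Complex.norm_real, hpe, Real.norm_eq_abs]
        refine (Chebyshev.abs_eval_T_real_le_one n ?_).trans_lt one_lt_two
        rw [abs_div, abs_of_pos hm]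
        exact (div_le_one hm).2 (hqm y hy)
    have hinv : (‖w x‖ / c)⁻¹ ≤ ‖w' x‖ / c := by
      rw [inv_div, div_le_div_iff₀ hwpos hc, mul_comm ‖w' x‖, hnprod x hxK]
      nlinarith
    have hfin : 2 * (q.eval x / m) ≤ 2 * P.eval x / c := by
      rw [← hsum, add_div]; linarith
    rw [mul_div_assoc, mul_le_mul_iff_right₀ two_pos, div_le_div_iff₀ hm hc] at hfin
    rw [div_le_div_iff₀ hxP hc]
    linarith
  have hlim := div_tendsto_atTop_leadingCoeff_div_of_degree_eq q P
    (by rw [degree_eq_natDegree hq.ne_zero, degree_eq_natDegree hP.ne_zero, hqd])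
  rw [hq.leadingCoeff, hP.leadingCoeff, div_one] at hlim
  have := le_of_tendsto hlim hev
  rw [one_le_div hc] at this
  linarith

lemma eval_nonpos_of_mem_bands {g : ℕ} {a b : Fin (g + 1) → ℝ} (h1 : ∀ j, a j < b j)
    (h2 : ∀ j k : Fin (g + 1), j < k → b j < a k) {x : ℝ} (hx : x ∈ ⋃ j, Icc (a j) (b j)) :
    (∏ j : Fin (g + 1), (X - C (a j)) * (X - C (b j))).eval x ≤ 0 := by
  obtain ⟨k, hk1, hk2⟩ := mem_iUnion.1 hx
  rw [eval_prod, ← Finset.mul_prod_erase _ _ (Finset.mem_univ k)]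
  refine mul_nonpos_of_nonpos_of_nonneg ?_ (Finset.prod_nonneg fun j hj => ?_)
  · simp only [eval_mul, eval_sub, eval_X, eval_C]
    exact mul_nonpos_of_nonneg_of_nonpos (by linarith) (by linarith)
  · simp only [eval_mul, eval_sub, eval_X, eval_C]
    rcases lt_or_gt_of_ne (Finset.ne_of_mem_erase hj) with h | h
    · have := h2 j k h
      have := h1 j
      exact mul_nonneg (by linarith) (by linarith)
    · have := h2 k j h
      have := h1 j
      exact mul_nonneg_of_nonpos_of_nonpos (by linarith) (by linarith)

theorem stmt17 (g : ℕ) (a b : Fin (g + 1) → ℝ)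
    (h1 : ∀ j, a j < b j) (h2 : ∀ j k : Fin (g + 1), j < k → b j < a k)
    (D : Polynomial ℝ)
    (hD : D = ∏ j : Fin (g + 1), (X - C (a j)) * (X - C (b j)))
    (E : Set ℝ) (hE : E = ⋃ j, Icc (a j) (b j))
    (P Q : Polynomial ℝ) (hP : P.Monic) (hQ : Q.Monic)
    (M : ℝ) (hM : 0 < M) (hPell : P ^ 2 - D * Q ^ 2 = C (M ^ 2))
    (r : ℕ) (hr : r = P.natDegree) :
    sSup ((fun x => |P.eval x|) '' E) = M ∧
    ∀ q : Polynomial ℝ, q.Monic → q.natDegree = r →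
      M ≤ sSup ((fun x => |q.eval x|) '' E) := by
  have hDE : ∀ x ∈ E, D.eval x ≤ 0 := fun x hx => by
    rw [hD]; exact eval_nonpos_of_mem_bands h1 h2 (hE ▸ hx)
  have hEc : IsCompact E := hE ▸ isCompact_iUnion fun j => isCompact_Icc
  have ha0 : a 0 ∈ E := by rw [hE]; exact mem_iUnion.2 ⟨0, le_rfl, (h1 0).le⟩
  have hPellR : ∀ x, P.eval x ^ 2 - D.eval x * Q.eval x ^ 2 = M ^ 2 := fun x => by
    simpa using congrArg (eval x) hPell
  constructor
  · refine IsGreatest.csSup_eq ⟨⟨a 0, ha0, ?_⟩, ?_⟩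
    · have h0 : D.eval (a 0) = 0 := by
        rw [hD, eval_prod]
        exact Finset.prod_eq_zero (Finset.mem_univ 0) (by simp)
      have := hPellR (a 0)
      rw [h0, zero_mul, sub_zero] at this
      simpa [abs_of_pos hM] using (sq_eq_sq_iff_abs_eq_abs _ _).1 this
    · rintro _ ⟨x, hx, rfl⟩
      refine abs_le_of_sq_le_sq ?_ hM.le
      nlinarith [hPellR x, hDE x hx, sq_nonneg (Q.eval x)]
  · intro q hq hqr
    have hbdd : BddAbove ((fun x => |q.eval x|) '' E) :=
      (hEc.image q.continuous.abs).bddAbove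
    have hle : ∀ x ∈ E, |q.eval x| ≤ sSup ((fun x => |q.eval x|) '' E) := fun x hx =>
      le_csSup hbdd ⟨x, hx, rfl⟩
    refine le_of_forall_gt_imp_ge_of_dense fun m hm => ?_
    exact chebyshev_lower_bound g a b h1 D hD E hE hDE P Q hP hQ M hM hPell q hq (hqr.trans hr) m
      (((abs_nonneg _).trans (hle _ ha0)).trans_lt hm) fun x hx => (hle x hx).trans hm.le
end

section
/- Let g ≥ 0 be an integer, let a_0 < b_0 < a_1 < ⋯ < a_g < b_g be real numbers, set D(X) = ∏_{j=0}^{g}(X−a_j)(X−b_j) and E = ⋃_{j=0}^{g}[a_j,b_j]. Suppose P, Q ∈ ℝ[X] are monic and M > 0 satisfies P² − D·Q² = M². Then the preimage of the segment [−M, M] under P : ℂ → ℂ is exactly E: for z ∈ ℂ, P(z) is a real number with |P(z)| ≤ M if and only if z is real and z ∈ E. -/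
open MeasureTheory Polynomial Set
open scoped NNReal ENNReal

/-!
If `x ∈ E` then `D(x) ≤ 0`, so the Pell–Abel equation gives `P(x)² ≤ M²`. The converse is a
maximum principle. The function `S(z) = ∏ⱼ (z - bⱼ) √((z - aⱼ)/(z - bⱼ))`, with the principal
square root, is a square root of `D` that is holomorphic off `E` and satisfies `S(z) ~ z^(g+1)` at
infinity (`pellSqrt`). Put `φ = P - S Q`. Since `(P - S Q)(P + S Q) = M²` and
`P + S Q ~ 2 z^(deg P)`, the function `φ` tends to `0` at infinity. By the parallelogram law
`|P - SQ|² + |P + SQ|² = 2|P|² + 2|D||Q|²`, which is continuous on `ℂ` and equals `2M²` wherever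
`P ∈ [-M, M]`. A sum and a product determine both factors, so `|φ| = M` at such points and `|φ|` is
continuous there, although `S` jumps across `E`. Thus `|φ|` is continuous on `ℂ`.

If some `z₀ ∉ E` had `P(z₀) ∈ [-M, M]`, then `|φ(z₀)| = M`, which is the value of `|φ|` on `E`, so
the maximum of `|φ|` over `ℂ` would be attained off `E`. Then `|φ|` would be constant and nonzero
on a component of `ℂ \ E`; this component contains a vertical ray, on which `φ → 0`.
-/

open Filter Topology

/-- The branch of the square root of `∏ⱼ (z - aⱼ)(z - bⱼ)` that is holomorphic off the segments
`[aⱼ, bⱼ]` and asymptotic to a power of `z` at infinity. At `z = bⱼ` the division by zero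
is harmless: the factor `z - bⱼ` makes the value `0`. -/
noncomputable def pellSqrt {n : ℕ} (a b : Fin n → ℝ) (z : ℂ) : ℂ :=
  ∏ j, ((z - b j) * ((z - a j) / (z - b j)) ^ (1 / 2 : ℂ))

lemma pellSqrt_sq {n : ℕ} (a b : Fin n → ℝ) (z : ℂ) :
    pellSqrt a b z ^ 2 = ∏ j, ((z - a j) * (z - b j)) := by
  unfold pellSqrt
  rw [← Finset.prod_pow]
  refine Finset.prod_congr rfl fun j _ => ?_
  have h : (((z - a j) / (z - b j)) ^ (1 / 2 : ℂ)) ^ 2 = (z - a j) / (z - b j) := by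
    have := Complex.cpow_nat_inv_pow ((z - a j) / (z - b j)) (n := 2) two_ne_zero
    simpa only [one_div, Nat.cast_ofNat] using this
  rw [mul_pow, h]
  by_cases hz : z - b j = 0
  · simp [hz]
  · field_simp

lemma div_mem_slitPlane {a b : ℝ} (hab : a < b) {z : ℂ}
    (hz : ∀ x ∈ Icc a b, (x : ℂ) ≠ z) : (z - a) / (z - b) ∈ Complex.slitPlane := by
  by_contra h
  rw [Complex.mem_slitPlane_iff, not_or, not_lt, not_not] at h
  obtain ⟨hre, him⟩ := h
  have hb : z - b ≠ 0 := fun h => hz b ⟨hab.le, le_rfl⟩ (sub_eq_zero.1 h).symm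
  set r : ℝ := ((z - a) / (z - b)).re with hr
  have hrz : (z - a) / (z - b) = (r : ℂ) := by
    apply Complex.ext <;> simp [hr, him]
  rw [div_eq_iff hb] at hrz
  have h1r : 0 < 1 - r := by linarith
  have h1rc : (1 - r : ℂ) ≠ 0 := by exact_mod_cast h1r.ne'
  -- solving `z - a = r (z - b)` for `z` gives a convex combination of `a` and `b`
  refine hz ((a - r * b) / (1 - r)) ⟨?_, ?_⟩ ?_
  · rw [le_div_iff₀ h1r]; nlinarith
  · rw [div_le_iff₀ h1r]; nlinarith
  · push_cast
    rw [div_eq_iff h1rc]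
    linear_combination -hrz

lemma pellSqrt_differentiableAt {n : ℕ} {a b : Fin n → ℝ} (hab : ∀ j, a j < b j) {z : ℂ}
    (hz : ∀ j, ∀ x ∈ Icc (a j) (b j), (x : ℂ) ≠ z) :
    DifferentiableAt ℂ (pellSqrt a b) z := by
  unfold pellSqrt
  refine DifferentiableAt.fun_finsetProd fun j _ => ?_
  have hb : z - b j ≠ 0 := fun h => hz j (b j) ⟨(hab j).le, le_rfl⟩ (sub_eq_zero.1 h).symm
  refine DifferentiableAt.mul (by fun_prop) ?_
  refine DifferentiableAt.cpow (DifferentiableAt.div (by fun_prop) (by fun_prop) hb)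
    (by fun_prop) (div_mem_slitPlane (hab j) (hz j))

lemma eventually_ne_zero_cocompact : ∀ᶠ z : ℂ in cocompact ℂ, z ≠ 0 :=
  (isCompact_singleton (x := (0 : ℂ))).compl_mem_cocompact

lemma tendsto_inv_cocompact : Tendsto (fun z : ℂ => z⁻¹) (cocompact ℂ) (𝓝 0) := by
  rw [← Metric.cobounded_eq_cocompact]
  exact tendsto_inv₀_cobounded

lemma tendsto_sub_div_cocompact (c : ℂ) :
    Tendsto (fun z : ℂ => (z - c) / z) (cocompact ℂ) (𝓝 1) := by
  have h : Tendsto (fun z : ℂ => 1 - c * z⁻¹) (cocompact ℂ) (𝓝 (1 - c * 0)) :=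
    tendsto_const_nhds.sub (tendsto_const_nhds.mul (tendsto_inv_cocompact))
  rw [mul_zero, sub_zero] at h
  refine h.congr' ?_
  have h0 := eventually_ne_zero_cocompact
  filter_upwards [h0] with z hz
  field_simp

lemma pellSqrt_div_tendsto {n : ℕ} (a b : Fin n → ℝ) :
    Tendsto (fun z => pellSqrt a b z / z ^ n) (cocompact ℂ) (𝓝 1) := by
  have h : Tendsto (fun z : ℂ => ∏ j, ((z - b j) / z *
      (((z - a j) / z) / ((z - b j) / z)) ^ (1 / 2 : ℂ))) (cocompact ℂ)
      (𝓝 (∏ _j : Fin n, (1 * (1 / 1) ^ (1 / 2 : ℂ)))) := by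
    refine tendsto_finsetProd _ fun j _ => ?_
    refine (tendsto_sub_div_cocompact _).mul ?_
    have hd := (tendsto_sub_div_cocompact (a j)).div (tendsto_sub_div_cocompact (b j)) one_ne_zero
    refine Tendsto.cpow hd tendsto_const_nhds ?_
    simp
  have h0 := eventually_ne_zero_cocompact
  simp only [div_one, Complex.one_cpow, mul_one, Finset.prod_const_one] at h
  refine h.congr' ?_
  filter_upwards [h0] with z hz
  have hn : z ^ n = ∏ _j : Fin n, z := by simp
  rw [pellSqrt, hn, ← Finset.prod_div_distrib]
  refine Finset.prod_congr rfl fun j _ => ?_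
  rw [div_div_div_cancel_right₀ hz]
  ring

lemma monic_div_tendsto {P : ℝ[X]} (hP : P.Monic) :
    Tendsto (fun z : ℂ => aeval z P / z ^ P.natDegree) (cocompact ℂ) (𝓝 1) := by
  -- `P(z) / z ^ deg P` is the value at `z⁻¹` of the reversed polynomial
  have hc : Tendsto (fun z : ℂ => aeval z⁻¹ P.reverse) (cocompact ℂ)
      (𝓝 (aeval (0 : ℂ) P.reverse)) :=
    ((Polynomial.continuous_aeval P.reverse).tendsto 0).comp (tendsto_inv_cocompact)
  have hv : aeval (0 : ℂ) P.reverse = 1 := by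
    rw [← Polynomial.coeff_zero_eq_aeval_zero', Polynomial.coeff_zero_reverse,
      hP.leadingCoeff, map_one]
  rw [hv] at hc
  refine hc.congr' ?_
  have h0 := eventually_ne_zero_cocompact
  filter_upwards [h0] with z hz
  let u : Invertible z := invertibleOfNonzero hz
  have := Polynomial.eval₂_reverse_mul_pow (algebraMap ℝ ℂ) z P
  rw [invOf_eq_inv] at this
  rw [eq_div_iff (pow_ne_zero _ hz)]
  exact this

/-- If `x y = m²` and `x + y = s` with `x, y ≥ 0`, then `x` is close to `m` when `s` is close
to `2m`. -/
lemma abs_sub_le_of_mul_eq {x y m s : ℝ} (hx : 0 ≤ x) (hy : 0 ≤ y)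
    (hxy : x * y = m ^ 2) (hs : x + y = s) : |x - m| ≤ √(s * |s - 2 * m|) := by
  apply Real.abs_le_sqrt
  have h : (x - m) ^ 2 = x * (s - 2 * m) := by subst hs; linear_combination -hxy
  rw [h]
  calc x * (s - 2 * m) ≤ x * |s - 2 * m| := by gcongr; exact le_abs_self _
    _ ≤ s * |s - 2 * m| := by gcongr; linarith

/-- The product `∏ⱼ (x - aⱼ)(x - bⱼ)` is nonpositive on each of the ordered segments: only the
factor belonging to the segment that contains `x` can be negative, and it is nonpositive. -/
lemma prod_nonpos_of_mem {n : ℕ} {a b : Fin n → ℝ} (h1 : ∀ j, a j < b j)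
    (h2 : ∀ j k : Fin n, j < k → b j < a k) {x : ℝ} {j : Fin n}
    (hx : x ∈ Icc (a j) (b j)) : ∏ k, ((x - a k) * (x - b k)) ≤ 0 := by
  rw [← Finset.mul_prod_erase _ _ (Finset.mem_univ j)]
  refine mul_nonpos_of_nonpos_of_nonneg
    (mul_nonpos_of_nonneg_of_nonpos (sub_nonneg.2 hx.1) (sub_nonpos.2 hx.2)) ?_
  refine Finset.prod_nonneg fun k hk => ?_
  have hx1 := hx.1
  have hx2 := hx.2
  have hab := h1 k
  rcases lt_or_gt_of_ne (Finset.ne_of_mem_erase hk) with h | h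
  · have := h2 k j h
    exact mul_nonneg (by linarith) (by linarith)
  · have := h2 j k h
    exact mul_nonneg_of_nonpos_of_nonpos (by linarith) (by linarith)

theorem stmt18 (g : ℕ) (a b : Fin (g + 1) → ℝ)
    (h1 : ∀ j, a j < b j) (h2 : ∀ j k : Fin (g + 1), j < k → b j < a k)
    (D : Polynomial ℝ)
    (hD : D = ∏ j : Fin (g + 1), (X - C (a j)) * (X - C (b j)))
    (E : Set ℝ) (hE : E = ⋃ j, Icc (a j) (b j))
    (P Q : Polynomial ℝ) (hP : P.Monic) (hQ : Q.Monic)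
    (M : ℝ) (hM : 0 < M) (hPell : P ^ 2 - D * Q ^ 2 = C (M ^ 2)) :
    ∀ z : ℂ, (∃ t : ℝ, Polynomial.aeval z P = (t : ℂ) ∧ |t| ≤ M) ↔
      ∃ x : ℝ, (x : ℂ) = z ∧ x ∈ E := by
  have memE : ∀ x ∈ E, ∃ t : ℝ, aeval (x : ℂ) P = (t : ℂ) ∧ |t| ≤ M := by
    intro x hx
    refine ⟨P.eval x, ?_, ?_⟩
    · exact (Polynomial.aeval_algebraMap_apply_eq_algebraMap_eval (A := ℂ) x P)
    · rw [hE, mem_iUnion] at hx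
      obtain ⟨j, hj⟩ := hx
      have hDx : D.eval x ≤ 0 := by
        rw [hD, Polynomial.eval_prod]
        simpa using prod_nonpos_of_mem h1 h2 hj
      have he := congrArg (Polynomial.eval x) hPell
      simp only [eval_sub, eval_pow, eval_mul, eval_C] at he
      refine abs_le_of_sq_le_sq ?_ hM.le
      nlinarith [mul_nonneg_of_nonpos_of_nonpos hDx (neg_nonpos.2 (sq_nonneg (Q.eval x)))]
  have hDm : D.Monic := by
    rw [hD]
    exact monic_prod_of_monic _ _ fun j _ => (monic_X_sub_C _).mul (monic_X_sub_C _)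
  have hDdeg : D.natDegree = 2 * (g + 1) := by
    rw [hD, natDegree_prod_of_monic _ _ fun j _ => (monic_X_sub_C _).mul (monic_X_sub_C _)]
    simp [(monic_X_sub_C _).natDegree_mul (monic_X_sub_C _), mul_comm]
  have hdeg : P.natDegree = g + 1 + Q.natDegree := by
    have h : P ^ 2 = D * Q ^ 2 + C (M ^ 2) := by rw [← hPell]; ring
    have h' := congrArg natDegree h
    rw [natDegree_add_C, hP.natDegree_pow, hDm.natDegree_mul (hQ.pow 2), hQ.natDegree_pow,
      hDdeg] at h'
    omega
  set S := pellSqrt a b with hS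
  have hSsq : ∀ z, S z ^ 2 = aeval z D := by
    intro z
    rw [hS, pellSqrt_sq, hD, map_prod]
    simp
  have hPz : ∀ z : ℂ, aeval z P ^ 2 - aeval z D * aeval z Q ^ 2 = (M : ℂ) ^ 2 := by
    intro z
    have := congrArg (aeval z) hPell
    simpa using this
  set φ : ℂ → ℂ := fun z => aeval z P - S z * aeval z Q with hφ
  set ψ : ℂ → ℂ := fun z => aeval z P + S z * aeval z Q with hψ
  have hprod : ∀ z, φ z * ψ z = (M : ℂ) ^ 2 := by
    intro z
    rw [← hPz z, ← hSsq z]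
    simp only [hφ, hψ]; ring
  have hnprod : ∀ z, ‖φ z‖ ^ 2 * ‖ψ z‖ ^ 2 = (M ^ 2) ^ 2 := by
    intro z
    rw [← mul_pow, ← norm_mul, hprod]
    simp
  set G : ℂ → ℝ := fun z => 2 * (‖aeval z P‖ ^ 2 + ‖aeval z D‖ * ‖aeval z Q‖ ^ 2) with hG
  have hsum : ∀ z, ‖φ z‖ ^ 2 + ‖ψ z‖ ^ 2 = G z := by
    intro z
    have hp := parallelogram_law_with_norm ℝ (aeval z P) (S z * aeval z Q)
    have hs : ‖S z * aeval z Q‖ ^ 2 = ‖aeval z D‖ * ‖aeval z Q‖ ^ 2 := by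
      rw [norm_mul, mul_pow, ← norm_pow, hSsq]
    simp only [hφ, hψ, hG]
    rw [← hs]
    linear_combination hp
  have hGcont : Continuous G := by
    have hc : ∀ R : ℝ[X], Continuous fun z : ℂ => aeval z R := fun R => R.continuous_aeval
    have := hc P
    have := hc Q
    have := hc D
    fun_prop
  have hbound : ∀ z, |‖φ z‖ ^ 2 - M ^ 2| ≤ √(G z * |G z - 2 * M ^ 2|) := fun z =>
    abs_sub_le_of_mul_eq (sq_nonneg _) (sq_nonneg _) (hnprod z) (hsum z)
  have hGval : ∀ z, (∃ t : ℝ, aeval z P = (t : ℂ) ∧ |t| ≤ M) → G z = 2 * M ^ 2 := by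
    rintro z ⟨t, ht, htM⟩
    have h := hPz z
    rw [ht] at h
    have h' : aeval z D * aeval z Q ^ 2 = ((-(M ^ 2 - t ^ 2) : ℝ) : ℂ) := by
      push_cast; linear_combination -h
    have hn := congrArg norm h'
    have ht2 : 0 ≤ M ^ 2 - t ^ 2 := by
      have := sq_le_sq' (abs_le.1 htM).1 (abs_le.1 htM).2
      linarith
    rw [norm_mul, norm_pow, Complex.norm_real, Real.norm_eq_abs, abs_neg, abs_of_nonneg ht2] at hn
    simp only [hG]
    rw [hn, ht, Complex.norm_real, Real.norm_eq_abs, sq_abs]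
    ring
  have hφval : ∀ z, (∃ t : ℝ, aeval z P = (t : ℂ) ∧ |t| ≤ M) → ‖φ z‖ = M := by
    intro z hz
    have h := hbound z
    rw [hGval z hz] at h
    simp only [sub_self, abs_zero, mul_zero, Real.sqrt_zero] at h
    have h' := sub_eq_zero.1 (abs_nonpos_iff.1 h)
    exact (pow_left_inj₀ (norm_nonneg _) hM.le two_ne_zero).1 h'
  have hφdiff : ∀ z : ℂ, (¬ ∃ x : ℝ, (x : ℂ) = z ∧ x ∈ E) → DifferentiableAt ℂ φ z := by
    intro z hz
    have hSd : DifferentiableAt ℂ S z := by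
      refine pellSqrt_differentiableAt h1 fun j x hx hxz => hz ⟨x, hxz, ?_⟩
      rw [hE]
      exact mem_iUnion.2 ⟨j, hx⟩
    exact (P.differentiable_aeval z).sub (hSd.mul (Q.differentiable_aeval z))
  have hNcont : Continuous fun z => ‖φ z‖ := by
    rw [continuous_iff_continuousAt]
    intro w
    by_cases hw : ∃ x : ℝ, (x : ℂ) = w ∧ x ∈ E
    · obtain ⟨x, rfl, hx⟩ := hw
      have hlim : Tendsto (fun z => √(G z * |G z - 2 * M ^ 2|)) (𝓝 (x : ℂ)) (𝓝 0) := by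
        have hc : Continuous fun z => √(G z * |G z - 2 * M ^ 2|) := by fun_prop
        have := hc.tendsto (x : ℂ)
        simpa [hGval _ (memE x hx)] using this
      have hsq : Tendsto (fun z => ‖φ z‖ ^ 2) (𝓝 (x : ℂ)) (𝓝 (M ^ 2)) := by
        rw [tendsto_iff_norm_sub_tendsto_zero]
        exact squeeze_zero (fun _ => norm_nonneg _) hbound hlim
      have := hsq.sqrt
      simp only [Real.sqrt_sq (norm_nonneg _), Real.sqrt_sq hM.le] at this
      rw [← hφval _ (memE x hx)] at this
      exact this
    · exact (hφdiff w hw).continuousAt.norm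
  -- `P + S Q ~ 2 z ^ deg P` near infinity, and `φ = M² / (P + S Q)`
  have hφlim : Tendsto (fun z => ‖φ z‖) (cocompact ℂ) (𝓝 0) := by
    have h0 := eventually_ne_zero_cocompact
    have hψlim : Tendsto (fun z => ψ z / z ^ P.natDegree) (cocompact ℂ) (𝓝 (1 + 1 * 1)) := by
      refine ((monic_div_tendsto hP).add
        ((pellSqrt_div_tendsto a b).mul (monic_div_tendsto hQ))).congr' ?_
      filter_upwards [h0] with z hz
      simp only [hψ]
      rw [hdeg, div_mul_div_comm, ← pow_add, ← add_div]
    have hinv : Tendsto (fun z : ℂ => (z⁻¹) ^ P.natDegree) (cocompact ℂ) (𝓝 0) := by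
      have := (tendsto_inv_cocompact).pow P.natDegree
      rwa [zero_pow (by omega)] at this
    have hdiv := (hinv.div hψlim (by norm_num)).const_mul ((M : ℂ) ^ 2)
    have hn := hdiv.norm
    simp only [zero_div, mul_zero, norm_zero] at hn
    refine hn.congr' ?_
    filter_upwards [h0] with z hz
    have hψ0 : ψ z ≠ 0 := by
      intro h
      have := hprod z
      rw [h, mul_zero] at this
      exact pow_ne_zero 2 (Complex.ofReal_ne_zero.2 hM.ne') this.symm
    congr 1
    rw [← hprod z]
    simp only [Pi.div_apply, inv_pow]
    field_simp
  have hEclosed : IsClosed {z : ℂ | ∃ x : ℝ, (x : ℂ) = z ∧ x ∈ E} := by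
    have hEc : IsCompact E := by
      rw [hE]
      exact isCompact_iUnion fun j => isCompact_Icc
    have := (hEc.image Complex.continuous_ofReal).isClosed
    convert this using 1
    ext z
    simp [and_comm]
  have hmax : ∀ z : ℂ, (¬ ∃ x : ℝ, (x : ℂ) = z ∧ x ∈ E) → M ≤ ‖φ z‖ →
      (∀ w, ‖φ w‖ ≤ ‖φ z‖) → False := by
    intro z hz hMz hzmax
    set U : Set ℂ := {z : ℂ | ∃ x : ℝ, (x : ℂ) = z ∧ x ∈ E}ᶜ with hU
    have hUo : IsOpen U := hEclosed.isOpen_compl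
    have hzU : z ∈ U := hz
    have hconst : EqOn (norm ∘ φ) (Function.const ℂ ‖φ z‖) (connectedComponentIn U z) :=
      Complex.norm_eqOn_of_isPreconnected_of_isMaxOn isPreconnected_connectedComponentIn
        hUo.connectedComponentIn
        (fun w hw => (hφdiff w (connectedComponentIn_subset U z hw)).differentiableWithinAt)
        (mem_connectedComponentIn hzU) (fun w _ => hzmax w)
    -- a vertical ray from `z`, pointing away from the real axis, stays in `U`
    obtain ⟨s, hs0, hs⟩ : ∃ s : ℝ, s ≠ 0 ∧ 0 ≤ s * z.im := by
      rcases le_total 0 z.im with h | h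
      · exact ⟨1, one_ne_zero, by linarith⟩
      · exact ⟨-1, by norm_num, by linarith⟩
    set ray : ℝ → ℂ := fun y => z + ((y * s : ℝ) : ℂ) * Complex.I with hray
    have hrayU : ray '' Ici 0 ⊆ U := by
      rintro _ ⟨y, hy, rfl⟩ ⟨x, hx, hxE⟩
      have him := congrArg Complex.im hx
      simp [hray] at him
      have hy0 : (0 : ℝ) ≤ y := hy
      have hy' : y = 0 := by
        have hs2 : 0 < s ^ 2 := by positivity
        have : 0 = s * z.im + y * s ^ 2 := by linear_combination s * him
        nlinarith
      refine hz ⟨x, ?_, hxE⟩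
      rw [hx]
      simp [hray, hy']
    have hraycont : Continuous ray := by fun_prop
    have hsub : ray '' Ici 0 ⊆ connectedComponentIn U z :=
      (isPreconnected_Ici.image ray hraycont.continuousOn).subset_connectedComponentIn
        ⟨0, self_mem_Ici, by simp [hray]⟩ hrayU
    have hraylim : Tendsto ray atTop (cocompact ℂ) := by
      rw [← Metric.cobounded_eq_cocompact, ← tendsto_norm_atTop_iff_cobounded]
      have h : Tendsto (fun y : ℝ => y * |s| - ‖z‖) atTop atTop :=
        tendsto_atTop_add_const_right _ _ (tendsto_id.atTop_mul_const (abs_pos.2 hs0))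
      refine tendsto_atTop_mono (fun y => ?_) h
      have h3 : ‖((y * s : ℝ) : ℂ) * Complex.I‖ ≤ ‖ray y‖ + ‖z‖ := by
        have : ((y * s : ℝ) : ℂ) * Complex.I = ray y - z := by simp [hray]
        rw [this]
        exact norm_sub_le _ _
      rw [norm_mul, Complex.norm_I, mul_one, Complex.norm_real, Real.norm_eq_abs, abs_mul] at h3
      have := mul_le_mul_of_nonneg_right (le_abs_self y) (abs_nonneg s)
      linarith
    have hlt := (hφlim.comp hraylim).eventually (gt_mem_nhds hM)
    obtain ⟨y, hy, hy0⟩ := (hlt.and (eventually_ge_atTop 0)).exists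
    have := hconst (hsub ⟨y, hy0, rfl⟩)
    simp only [Function.comp_apply, Function.const_apply] at this hy
    linarith
  intro z
  constructor
  · intro hz
    by_contra hzE
    have hzM := hφval z hz
    obtain ⟨w, hw⟩ := hNcont.exists_forall_ge' z
      ((hφlim.eventually (gt_mem_nhds hM)).mono fun y hy => by rw [hzM]; exact hy.le)
    by_cases hwE : ∃ x : ℝ, (x : ℂ) = w ∧ x ∈ E
    · obtain ⟨x, rfl, hx⟩ := hwE
      refine hmax z hzE hzM.ge fun v => ?_
      rw [hzM, ← hφval _ (memE x hx)]
      exact hw v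
    · exact hmax w hwE (hzM ▸ hw z) hw
  · rintro ⟨x, rfl, hx⟩
    exact memE x hx
end
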